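/- arXiv:2001.08302 — 2 statements merged into one kernel-verified Lean document; each statement's English description precedes it below -/
import Mathlib

section
/- Let n ≥ 1, let Ω ⊆ ℂⁿ be a bounded measurable set equipped with Lebesgue measure μ, let N ⊆ Ω be measurable, and let 1 < p < ∞. Let σ : Ω → [0,∞) be measurable and positive a.e., with both σ and σ' := σ^{-1/(p-1)} integrable on Ω. Let K : Ω × Ω → ℂ be measurable and suppose there is M₀ ≥ 0 such that |K(z,w)| ≤ M₀ for all (z,w) ∈ (Ω × Ω) \ (N × N). Suppose there is C₀ ≥ 0 such that for every f ∈ L^p_σ(Ω) the integral ∫_N K(z,w) f(w) dμ(w) converges absolutely for a.e. z ∈ N and the operator P|_N f(z) := 1_N(z)·∫_N K(z,w) f(w) dμ(w) satisfies ‖P|_N f‖_{L^p_σ(Ω)} ≤ C₀·‖f‖_{L^p_σ(Ω)}. Then there is C ≥ 0 such that for every f ∈ L^p_σ(Ω) the integral P f(z) := ∫_Ω K(z,w) f(w) dμ(w) converges absolutely for a.e. z ∈ Ω and ‖P f‖_{L^p_σ(Ω)} ≤ C·‖f‖_{L^p_σ(Ω)}. -/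
open MeasureTheory ENNReal

open scoped NNReal

/-! Split the kernel as `K = 1_{N × N} K + 1_{(N × N)ᶜ} K`. The first summand is the kernel of
`P|_N`. The second is bounded by `M₀`, and since `∫ σ' < ∞`, Hölder's inequality embeds
`L^p_σ(Ω)` in `L¹(Ω)`; hence it maps `L^p_σ(Ω)` into bounded functions, which lie in `L^p_σ(Ω)`
because `∫ σ < ∞`. -/

theorem indicator_prod_mul_eq {X Y R : Type*} [MulZeroClass R] (S : Set X) (T : Set Y)
    (K : X × Y → R) (f : Y → R) (z : X) :
    (fun w ↦ (S ×ˢ T).indicator K (z, w) * f w) =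
      S.indicator (fun z ↦ T.indicator fun w ↦ K (z, w) * f w) z := by
  ext w
  by_cases hz : z ∈ S <;> by_cases hw : w ∈ T <;> simp [hz, hw]

section

variable {X 𝕜 E : Type*} [MeasurableSpace X] [RCLike 𝕜] [NormedAddCommGroup E]
  {μ ν : Measure X}

/-- The integral operator `f ↦ ∫ K (·, w) f(w) dμ(w)` is bounded on `L^p(ν)`, with the integral
converging absolutely at `μ`-almost every point. The measure of integration `μ` and the measure `ν`
of the norm are kept apart: for the weighted space `L^p_σ(μ)`, take `ν = μ.withDensity σ`. -/
def IsLpBoundedKernel (μ ν : Measure X) (p : ℝ≥0∞) (K : X × X → 𝕜) : Prop :=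
  ∃ C : ℝ≥0, ∀ f : X → 𝕜, Measurable f → eLpNorm f p ν < ∞ →
    (∀ᵐ z ∂μ, Integrable (fun w ↦ K (z, w) * f w) μ) ∧
      eLpNorm (fun z ↦ ∫ w, K (z, w) * f w ∂μ) p ν ≤ C * eLpNorm f p ν

theorem IsLpBoundedKernel.add {p : ℝ≥0∞} [SFinite μ] (hνμ : ν ≪ μ) (hp : 1 ≤ p) {K L : X × X → 𝕜}
    (hKm : Measurable K) (hLm : Measurable L)
    (hK : IsLpBoundedKernel μ ν p K) (hL : IsLpBoundedKernel μ ν p L) :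
    IsLpBoundedKernel μ ν p (K + L) := by
  obtain ⟨C, hC⟩ := hK
  obtain ⟨D, hD⟩ := hL
  refine ⟨C + D, fun f hf hfp ↦ ?_⟩
  obtain ⟨hKint, hKle⟩ := hC f hf hfp
  obtain ⟨hLint, hLle⟩ := hD f hf hfp
  have hmeas {J : X × X → 𝕜} (hJ : Measurable J) :
      AEStronglyMeasurable (fun z ↦ ∫ w, J (z, w) * f w ∂μ) ν :=
    (hJ.mul (hf.comp measurable_snd)).stronglyMeasurable.integral_prod_right'.aestronglyMeasurable
  have hsplit : (fun z ↦ ∫ w, (K + L) (z, w) * f w ∂μ) =ᵐ[ν]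
      (fun z ↦ ∫ w, K (z, w) * f w ∂μ) + fun z ↦ ∫ w, L (z, w) * f w ∂μ := by
    refine hνμ.ae_eq ?_
    filter_upwards [hKint, hLint] with z hKz hLz
    simp only [Pi.add_apply, add_mul, integral_add hKz hLz]
  constructor
  · filter_upwards [hKint, hLint] with z hKz hLz
    simp only [Pi.add_apply, add_mul]
    exact hKz.add hLz
  · calc eLpNorm (fun z ↦ ∫ w, (K + L) (z, w) * f w ∂μ) p ν
        ≤ eLpNorm (fun z ↦ ∫ w, K (z, w) * f w ∂μ) p ν
            + eLpNorm (fun z ↦ ∫ w, L (z, w) * f w ∂μ) p ν :=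
          (eLpNorm_congr_ae hsplit).trans_le (eLpNorm_add_le (hmeas hKm) (hmeas hLm) hp)
      _ ≤ C * eLpNorm f p ν + D * eLpNorm f p ν := add_le_add hKle hLle
      _ = (C + D : ℝ≥0) * eLpNorm f p ν := by rw [ENNReal.coe_add, add_mul]

theorem isLpBoundedKernel_of_ae_bound {p : ℝ≥0∞} [IsFiniteMeasure ν] (hνμ : ν ≪ μ)
    {K : X × X → 𝕜} (hKm : Measurable K) {M : ℝ} (hKM : ∀ᵐ z ∂μ, ∀ᵐ w ∂μ, ‖K (z, w)‖ ≤ M)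
    {S : ℝ≥0∞} (hS : S ≠ ∞)
    (hembed : ∀ f : X → 𝕜, Measurable f → eLpNorm f 1 μ ≤ S * eLpNorm f p ν) :
    IsLpBoundedKernel μ ν p K := by
  have hmass : ν Set.univ ^ p.toReal⁻¹ ≠ ∞ :=
    ENNReal.rpow_ne_top_of_nonneg (inv_nonneg.2 ENNReal.toReal_nonneg) (measure_ne_top ν _)
  refine ⟨M.toNNReal * S.toNNReal * (ν Set.univ ^ p.toReal⁻¹).toNNReal, fun f hf hfp ↦ ?_⟩
  have hbound : ∀ᵐ z ∂μ, ∫⁻ w, ‖K (z, w) * f w‖ₑ ∂μ ≤ ENNReal.ofReal M * (S * eLpNorm f p ν) := by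
    filter_upwards [hKM] with z hz
    have hKf : ∀ᵐ w ∂μ, ‖K (z, w) * f w‖ ≤ M * ‖f w‖ := by
      filter_upwards [hz] with w hw
      rw [norm_mul]
      gcongr
    rw [← eLpNorm_one_eq_lintegral_enorm]
    exact (eLpNorm_le_mul_eLpNorm_of_ae_le_mul hKf 1).trans (mul_le_mul_right (hembed f hf) _)
  constructor
  · filter_upwards [hbound] with z hz
    exact ⟨((hKm.comp measurable_prodMk_left).mul hf).aestronglyMeasurable,
      hz.trans_lt (by finiteness)⟩
  · calc eLpNorm (fun z ↦ ∫ w, K (z, w) * f w ∂μ) p ν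
        ≤ (ENNReal.ofReal M * (S * eLpNorm f p ν)) • ν Set.univ ^ p.toReal⁻¹ :=
          eLpNorm_le_of_ae_enorm_bound <| hνμ.ae_le <|
            hbound.mono fun z hz ↦ (enorm_integral_le_lintegral_enorm _).trans hz
      _ = (M.toNNReal * S.toNNReal * (ν Set.univ ^ p.toReal⁻¹).toNNReal : ℝ≥0) *
            eLpNorm f p ν := by
          rw [smul_eq_mul, ENNReal.coe_mul, ENNReal.coe_mul, ENNReal.coe_toNNReal hS,
            ENNReal.coe_toNNReal hmass, ENNReal.ofReal]
          ring

theorem eLpNorm_withDensity_eq_lintegral {f : X → E} {σ : X → ℝ≥0∞} {p : ℝ} (hp : 0 < p)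
    (hσm : AEMeasurable σ μ) (hσ : ∀ᵐ x ∂μ, σ x < ∞) :
    eLpNorm f (ENNReal.ofReal p) (μ.withDensity σ) = (∫⁻ x, ‖f x‖ₑ ^ p * σ x ∂μ) ^ (1 / p) := by
  rw [eLpNorm_eq_lintegral_rpow_enorm_toReal (by simpa using hp) ENNReal.ofReal_ne_top,
    ENNReal.toReal_ofReal hp.le, lintegral_withDensity_eq_lintegral_mul_non_measurable₀ _ hσm hσ]
  simp only [Pi.mul_apply, mul_comm]

/-- Hölder's inequality for `‖f‖ = ‖f‖ σ⁻¹ · σ`, read as a product of `‖f‖` and `σ⁻¹` in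
`μ.withDensity σ`; the exponents satisfy `σ^{-q} σ = σ^{-1/(p-1)}` for `q = p / (p - 1)`. -/
theorem eLpNorm_one_le_eLpNorm_withDensity_mul {f : X → E} (hf : AEStronglyMeasurable f μ)
    {σ : X → ℝ≥0∞} {p : ℝ} (hp : 1 < p) (hσm : AEMeasurable σ μ) (hσ0 : ∀ᵐ x ∂μ, σ x ≠ 0)
    (hσ : ∀ᵐ x ∂μ, σ x < ∞) :
    eLpNorm f 1 μ ≤ (∫⁻ x, σ x ^ (-1 / (p - 1)) ∂μ) ^ (1 / p.conjExponent) *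
      eLpNorm f (ENNReal.ofReal p) (μ.withDensity σ) := by
  have hpq : p.HolderConjugate p.conjExponent := .conjExponent hp
  have hνμ : μ.withDensity σ ≪ μ := withDensity_absolutelyContinuous μ σ
  have hexp : 1 + -p.conjExponent = -1 / (p - 1) := by
    have : p - 1 ≠ 0 := hpq.sub_one_ne_zero
    rw [Real.conjExponent]
    field_simp
    ring
  have hweight : ∫⁻ x, (σ x)⁻¹ ^ p.conjExponent ∂μ.withDensity σ
      = ∫⁻ x, σ x ^ (-1 / (p - 1)) ∂μ := by
    rw [lintegral_withDensity_eq_lintegral_mul_non_measurable₀ _ hσm hσ]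
    refine lintegral_congr_ae ?_
    filter_upwards [hσ0, hσ] with x h0 ht
    rw [Pi.mul_apply, ENNReal.inv_rpow, ← ENNReal.rpow_neg, ← hexp,
      ENNReal.rpow_add _ _ h0 ht.ne, ENNReal.rpow_one]
  calc eLpNorm f 1 μ
      = ∫⁻ x, ((fun x ↦ ‖f x‖ₑ) * fun x ↦ (σ x)⁻¹) x ∂μ.withDensity σ := by
        rw [eLpNorm_one_eq_lintegral_enorm,
          lintegral_withDensity_eq_lintegral_mul_non_measurable₀ _ hσm hσ]
        refine lintegral_congr_ae ?_
        filter_upwards [hσ0, hσ] with x h0 ht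
        simp only [Pi.mul_apply]
        rw [mul_left_comm, ENNReal.mul_inv_cancel h0 ht.ne, mul_one]
    _ ≤ (∫⁻ x, ‖f x‖ₑ ^ p ∂μ.withDensity σ) ^ (1 / p) *
          (∫⁻ x, (σ x)⁻¹ ^ p.conjExponent ∂μ.withDensity σ) ^ (1 / p.conjExponent) :=
        ENNReal.lintegral_mul_le_Lp_mul_Lq _ hpq (hf.enorm.mono_ac hνμ) (hσm.inv.mono_ac hνμ)
    _ = _ := by
        rw [hweight, mul_comm, eLpNorm_eq_lintegral_rpow_enorm_toReal
          (by simpa using hpq.pos) ENNReal.ofReal_ne_top, ENNReal.toReal_ofReal hpq.nonneg]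

theorem isLpBoundedKernel_withDensity_iff {σ : X → ℝ≥0∞} {p : ℝ} (hp : 0 < p)
    (hσm : AEMeasurable σ μ) (hσ : ∀ᵐ x ∂μ, σ x < ∞) {K : X × X → 𝕜} :
    IsLpBoundedKernel μ (μ.withDensity σ) (ENNReal.ofReal p) K ↔
      ∃ C : ℝ, 0 ≤ C ∧ ∀ f : X → 𝕜, Measurable f → ∫⁻ z, ‖f z‖ₑ ^ p * σ z ∂μ < ∞ →
        (∀ᵐ z ∂μ, Integrable (fun w ↦ K (z, w) * f w) μ) ∧
          (∫⁻ z, ‖∫ w, K (z, w) * f w ∂μ‖ₑ ^ p * σ z ∂μ) ^ (1 / p) ≤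
            ENNReal.ofReal C * (∫⁻ z, ‖f z‖ₑ ^ p * σ z ∂μ) ^ (1 / p) := by
  simp only [IsLpBoundedKernel, eLpNorm_withDensity_eq_lintegral hp hσm hσ,
    ENNReal.rpow_lt_top_iff_of_pos (one_div_pos.2 hp)]
  constructor
  · rintro ⟨C, hC⟩
    exact ⟨C, C.2, by simpa only [ENNReal.ofReal_coe_nnreal] using hC⟩
  · rintro ⟨C, -, hC⟩
    exact ⟨C.toNNReal, hC⟩

theorem integral_indicator_prod_mul {Z : Type*} (S : Set Z) {T : Set X} (hT : MeasurableSet T)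
    (K : Z × X → 𝕜) (f : X → 𝕜) (z : Z) :
    ∫ w, (S ×ˢ T).indicator K (z, w) * f w ∂μ =
      S.indicator (fun z ↦ ∫ w in T, K (z, w) * f w ∂μ) z := by
  rw [indicator_prod_mul_eq]
  by_cases hz : z ∈ S <;> simp [hz, integral_indicator hT]

theorem ae_integrable_indicator_prod_mul_iff {Z : Type*} [MeasurableSpace Z] {ρ : Measure Z}
    {S : Set Z} (hS : MeasurableSet S) {T : Set X} (hT : MeasurableSet T)
    (K : Z × X → 𝕜) (f : X → 𝕜) :
    (∀ᵐ z ∂ρ, Integrable (fun w ↦ (S ×ˢ T).indicator K (z, w) * f w) μ) ↔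
      ∀ᵐ z ∂ρ.restrict S, IntegrableOn (fun w ↦ K (z, w) * f w) T μ := by
  simp only [indicator_prod_mul_eq, ae_restrict_iff' hS]
  refine Filter.eventually_congr (.of_forall fun z ↦ ?_)
  by_cases hz : z ∈ S <;> simp [hz, integrable_indicator_iff hT]

theorem IsLpBoundedKernel.of_indicator [SFinite μ] {σ : X → ℝ≥0∞} (hσm : AEMeasurable σ μ) {p : ℝ}
    (hp : 1 < p) (hσ : ∫⁻ x, σ x ∂μ ≠ ∞) (hσ' : ∫⁻ x, σ x ^ (-1 / (p - 1)) ∂μ ≠ ∞)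
    {K : X × X → 𝕜} (hKm : Measurable K) {D : Set (X × X)} (hD : MeasurableSet D) {M : ℝ}
    (hKM : ∀ᵐ z ∂μ, ∀ᵐ w ∂μ, (z, w) ∉ D → ‖K (z, w)‖ ≤ M)
    (hKD : IsLpBoundedKernel μ (μ.withDensity σ) (ENNReal.ofReal p) (D.indicator K)) :
    IsLpBoundedKernel μ (μ.withDensity σ) (ENNReal.ofReal p) K := by
  have hνμ : μ.withDensity σ ≪ μ := withDensity_absolutelyContinuous μ σ
  have : IsFiniteMeasure (μ.withDensity σ) := isFiniteMeasure_withDensity hσ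
  have hσ_top : ∀ᵐ x ∂μ, σ x < ∞ := ae_lt_top' hσm hσ
  have hσ_ne_zero : ∀ᵐ x ∂μ, σ x ≠ 0 := by
    filter_upwards [ae_lt_top' (hσm.pow_const _) hσ'] with x hx h0
    rw [h0, ENNReal.zero_rpow_of_neg (div_neg_of_neg_of_pos neg_one_lt_zero (sub_pos.2 hp))] at hx
    exact hx.false
  have hKDc : ∀ᵐ z ∂μ, ∀ᵐ w ∂μ, ‖Dᶜ.indicator K (z, w)‖ ≤ max M 0 := by
    filter_upwards [hKM] with z hz
    filter_upwards [hz] with w hzw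
    by_cases h : (z, w) ∈ D <;> simp [h, hzw]
  have hS : (∫⁻ x, σ x ^ (-1 / (p - 1)) ∂μ) ^ (1 / p.conjExponent) ≠ ∞ :=
    ENNReal.rpow_ne_top_of_nonneg (Real.HolderConjugate.conjExponent hp).symm.one_div_nonneg hσ'
  rw [← Set.indicator_self_add_compl D K]
  exact hKD.add hνμ (by simpa using hp.le) (hKm.indicator hD) (hKm.indicator hD.compl) <|
    isLpBoundedKernel_of_ae_bound hνμ (hKm.indicator hD.compl) hKDc hS fun f hf ↦
      eLpNorm_one_le_eLpNorm_withDensity_mul hf.aestronglyMeasurable hp hσm hσ_ne_zero hσ_top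

theorem statement0_general [SFinite μ] {Ω N : Set X} (hΩm : MeasurableSet Ω)
    (hNm : MeasurableSet N) (hNΩ : N ⊆ Ω) {p : ℝ} (hp : 1 < p) {σ : X → ℝ} (hσm : Measurable σ)
    (hσpos : ∀ᵐ z ∂μ.restrict Ω, 0 < σ z)
    (hσint : ∫⁻ z in Ω, ENNReal.ofReal (σ z) ∂μ < ∞)
    (hσ'int : ∫⁻ z in Ω, ENNReal.ofReal (σ z ^ (-1 / (p - 1))) ∂μ < ∞)
    {K : X → X → 𝕜} (hKm : Measurable fun q : X × X ↦ K q.1 q.2)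
    {M₀ : ℝ} (hKbd : ∀ z w, z ∈ Ω → w ∈ Ω → ¬(z ∈ N ∧ w ∈ N) → ‖K z w‖ ≤ M₀)
    {C₀ : ℝ} (hC₀ : 0 ≤ C₀)
    (hPN : ∀ f : X → 𝕜, Measurable f →
      ∫⁻ z in Ω, ENNReal.ofReal ‖f z‖ ^ p * ENNReal.ofReal (σ z) ∂μ < ∞ →
      (∀ᵐ z ∂μ.restrict N, IntegrableOn (fun w ↦ K z w * f w) N μ) ∧
      (∫⁻ z in Ω, ENNReal.ofReal ‖N.indicator (fun z' ↦ ∫ w in N, K z' w * f w ∂μ) z‖ ^ p *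
          ENNReal.ofReal (σ z) ∂μ) ^ (1 / p) ≤
        ENNReal.ofReal C₀ *
          (∫⁻ z in Ω, ENNReal.ofReal ‖f z‖ ^ p * ENNReal.ofReal (σ z) ∂μ) ^ (1 / p)) :
    ∃ C : ℝ, 0 ≤ C ∧ ∀ f : X → 𝕜, Measurable f →
      ∫⁻ z in Ω, ENNReal.ofReal ‖f z‖ ^ p * ENNReal.ofReal (σ z) ∂μ < ∞ →
      (∀ᵐ z ∂μ.restrict Ω, IntegrableOn (fun w ↦ K z w * f w) Ω μ) ∧
      (∫⁻ z in Ω, ENNReal.ofReal ‖∫ w in Ω, K z w * f w ∂μ‖ ^ p * ENNReal.ofReal (σ z) ∂μ) ^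
          (1 / p) ≤
        ENNReal.ofReal C *
          (∫⁻ z in Ω, ENNReal.ofReal ‖f z‖ ^ p * ENNReal.ofReal (σ z) ∂μ) ^ (1 / p) := by
  simp only [ofReal_norm] at hPN ⊢
  have hσ'_ne_top : ∫⁻ z in Ω, ENNReal.ofReal (σ z) ^ (-1 / (p - 1)) ∂μ ≠ ∞ := by
    rw [lintegral_congr_ae (hσpos.mono fun z hz ↦ ENNReal.ofReal_rpow_of_pos hz)]
    exact hσ'int.ne
  have hKbd_ae : ∀ᵐ z ∂μ.restrict Ω, ∀ᵐ w ∂μ.restrict Ω, (z, w) ∉ N ×ˢ N → ‖K z w‖ ≤ M₀ :=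
    ae_restrict_of_forall_mem hΩm fun z hz ↦ ae_restrict_of_forall_mem hΩm fun w hw ↦
      hKbd z w hz hw
  have hbdd_iff (L : X × X → 𝕜) :=
    isLpBoundedKernel_withDensity_iff (μ := μ.restrict Ω) (K := L) (zero_lt_one.trans hp)
      hσm.ennreal_ofReal.aemeasurable (.of_forall fun _ ↦ ENNReal.ofReal_lt_top)
  refine (hbdd_iff fun q ↦ K q.1 q.2).1 <| .of_indicator hσm.ennreal_ofReal.aemeasurable hp
    hσint.ne hσ'_ne_top hKm (hNm.prod hNm) hKbd_ae <| (hbdd_iff _).2 ⟨C₀, hC₀, ?_⟩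
  simpa only [ae_integrable_indicator_prod_mul_iff hNm hNm, integral_indicator_prod_mul N hNm,
    IntegrableOn, Measure.restrict_restrict_of_subset hNΩ] using hPN

end

/-- Reduction of the weighted boundedness of a Bergman-type projection on `Ω`
to its boundedness on a relative neighborhood `N` of the boundary: if the
kernel is bounded off `N × N`, `σ` and `σ' = σ^{-1/(p-1)}` are integrable on
`Ω`, and the restricted operator `P|_N` is bounded on `L^p_σ(Ω)`, then the
full operator `P` is bounded on `L^p_σ(Ω)`. -/
theorem statement0 (n : ℕ) (hn : 1 ≤ n)
    (Ω N : Set (Fin n → ℂ)) (hΩm : MeasurableSet Ω)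
    (hΩbd : Bornology.IsBounded Ω) (hNm : MeasurableSet N) (hNΩ : N ⊆ Ω)
    (p : ℝ) (hp : 1 < p)
    (σ : (Fin n → ℂ) → ℝ) (hσm : Measurable σ)
    (hσpos : ∀ᵐ z ∂(volume.restrict Ω), 0 < σ z)
    (hσint : ∫⁻ z in Ω, ENNReal.ofReal (σ z) < ⊤)
    (hσ'int : ∫⁻ z in Ω, ENNReal.ofReal (σ z ^ (-1 / (p - 1))) < ⊤)
    (K : (Fin n → ℂ) → (Fin n → ℂ) → ℂ)
    (hKm : Measurable fun q : (Fin n → ℂ) × (Fin n → ℂ) => K q.1 q.2)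
    (M₀ : ℝ) (hM₀ : 0 ≤ M₀)
    (hKbd : ∀ z w, z ∈ Ω → w ∈ Ω → ¬(z ∈ N ∧ w ∈ N) → ‖K z w‖ ≤ M₀)
    (C₀ : ℝ) (hC₀ : 0 ≤ C₀)
    (hPN : ∀ f : (Fin n → ℂ) → ℂ, Measurable f →
      (∫⁻ z in Ω, ENNReal.ofReal ‖f z‖ ^ p * ENNReal.ofReal (σ z)) < ⊤ →
      (∀ᵐ z ∂(volume.restrict N), IntegrableOn (fun w => K z w * f w) N volume) ∧
      (∫⁻ z in Ω,
          ENNReal.ofReal ‖N.indicator (fun z' => ∫ w in N, K z' w * f w) z‖ ^ p *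
            ENNReal.ofReal (σ z)) ^ (1 / p) ≤
        ENNReal.ofReal C₀ *
          (∫⁻ z in Ω, ENNReal.ofReal ‖f z‖ ^ p * ENNReal.ofReal (σ z)) ^ (1 / p)) :
    ∃ C : ℝ, 0 ≤ C ∧ ∀ f : (Fin n → ℂ) → ℂ, Measurable f →
      (∫⁻ z in Ω, ENNReal.ofReal ‖f z‖ ^ p * ENNReal.ofReal (σ z)) < ⊤ →
      (∀ᵐ z ∂(volume.restrict Ω), IntegrableOn (fun w => K z w * f w) Ω volume) ∧
      (∫⁻ z in Ω, ENNReal.ofReal ‖∫ w in Ω, K z w * f w‖ ^ p *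
          ENNReal.ofReal (σ z)) ^ (1 / p) ≤
        ENNReal.ofReal C *
          (∫⁻ z in Ω, ENNReal.ofReal ‖f z‖ ^ p * ENNReal.ofReal (σ z)) ^ (1 / p) := by
  exact statement0_general hΩm hNm hNΩ hp hσm hσpos hσint hσ'int hKm hKbd hC₀ hPN
end

section
/- Let (Ω, μ) be a measure space, 1 < p < ∞, and σ : Ω → [0,∞) measurable and positive μ-a.e.; set σ' := σ^{-1/(p-1)}. Let T be a linear operator on L^p_σ := {f measurable : ∫_Ω |f|^p σ dμ < ∞} satisfying ‖Tf‖_{L^p_σ} ≤ A·‖f‖_{L^p_σ} for all f ∈ L^p_σ, where ‖g‖_{L^p_σ} := (∫_Ω |g|^p σ dμ)^{1/p}. Let B₁, B₂ ⊆ Ω be measurable sets with 0 < μ(B_i) < ∞, ∫_{B_i} σ dμ < ∞ and ∫_{B_i} σ' dμ < ∞ for i = 1, 2, and suppose there is c₀ > 0 such that for each pair i ≠ j in {1,2} and every measurable f ≥ 0 supported in B_i with f ∈ L^p_σ: |Tf(z)| ≥ c₀·(1/μ(B_i))·∫_{B_i} f dμ for μ-a.e. z ∈ B_j. Then ((1/μ(B₁))·∫_{B₁}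 σ dμ)·((1/μ(B₁))·∫_{B₁} σ' dμ)^{p-1} ≤ c₀^{-2p}·A^{2p}. -/
open MeasureTheory ENNReal

/-!
Write `σ(B)` for `∫_B σ dμ`. Testing `T` on the indicator of `B₂` gives
`c₀^p σ(B₁) ≤ A^p σ(B₂)`. The dual weight satisfies `(σ')^p σ = σ'`, so testing `T` on `σ'`
restricted to `B₁` gives `c₀^p (σ'(B₁) / μ(B₁))^p σ(B₂) ≤ A^p σ'(B₁)`. Multiplying the two
inequalities eliminates `σ(B₂)`, and one factor `σ'(B₁)` cancels.
-/

open scoped NNReal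

section Definitions

variable {Ω 𝕜 E : Type*} [MeasurableSpace Ω]

/-- The `p`-th power `∫ |f|^p w dμ` of the norm of `f` in the weighted space `L^p_w`. -/
noncomputable def weightedLpIntegral [ENorm E] (μ : Measure Ω) (p : ℝ) (w : Ω → ℝ≥0∞)
    (f : Ω → E) : ℝ≥0∞ :=
  ∫⁻ z, ‖f z‖ₑ ^ p * w z ∂μ

/-- The estimate `‖T f‖ ≤ A ‖f‖` in the norm of `L^p_w`, for every measurable `f` in that space. -/
def BoundedOnWeightedLp [MeasurableSpace 𝕜] [ENorm 𝕜] [ENorm E] (μ : Measure Ω) (p : ℝ)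
    (w : Ω → ℝ≥0∞) (T : (Ω → 𝕜) → Ω → E) (A : ℝ≥0∞) : Prop :=
  ∀ f : Ω → 𝕜, Measurable f → weightedLpIntegral μ p w f < ⊤ →
    weightedLpIntegral μ p w (T f) ^ (1 / p) ≤ A * weightedLpIntegral μ p w f ^ (1 / p)

/-- For nonnegative `g` in `L^p_w` supported in `B`, the modulus of `T g` is at least `c` times the
average of `g` over `B`, almost everywhere on `B'`; this is one direction of the two-ball
hypothesis. Nonnegative functions are encoded as `ℝ≥0`-valued ones. -/
def DominatesAverages [RCLike 𝕜] [ENorm E] (μ : Measure Ω) (p : ℝ) (w : Ω → ℝ≥0∞)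
    (T : (Ω → 𝕜) → Ω → E) (c : ℝ≥0∞) (B B' : Set Ω) : Prop :=
  ∀ g : Ω → ℝ≥0, Measurable g → Function.support g ⊆ B →
    ∫⁻ x, (g x : ℝ≥0∞) ^ p * w x ∂μ < ⊤ →
    ∀ᵐ z ∂μ.restrict B', c * ⨍⁻ x in B, g x ∂μ ≤ ‖T (fun x => ((g x : ℝ) : 𝕜)) z‖ₑ

/-- The weight `w' = w^(-1/(p-1))` dual to `w` with respect to the exponent `p`. -/
noncomputable def dualWeight (p : ℝ) (w : Ω → ℝ≥0∞) (x : Ω) : ℝ≥0∞ :=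
  w x ^ (-1 / (p - 1))

/-- The product of averages of `w` and `w'` over `B` whose supremum over `B` is the Békollè–Bonami
`B_p` constant of `w`. -/
noncomputable def bekolleBonamiProduct (μ : Measure Ω) (p : ℝ) (w : Ω → ℝ≥0∞) (B : Set Ω) :
    ℝ≥0∞ :=
  (⨍⁻ x in B, w x ∂μ) * (⨍⁻ x in B, dualWeight p w x ∂μ) ^ (p - 1)

end Definitions

section DualWeight

variable {Ω : Type*} {p : ℝ}

lemma dualWeight_rpow_mul_self (hp : 1 < p) {w : Ω → ℝ≥0∞} {x : Ω} (hx : dualWeight p w x ≠ ⊤) :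
    dualWeight p w x ^ p * w x = dualWeight p w x := by
  have hexp : -1 / (p - 1) < 0 := div_neg_of_neg_of_pos (by norm_num) (sub_pos.2 hp)
  have hx0 : w x ≠ 0 := fun h => hx (by rw [dualWeight, h, zero_rpow_of_neg hexp])
  by_cases hxt : w x = ⊤
  · simp only [dualWeight, hxt, top_rpow_of_neg hexp, zero_rpow_of_pos (one_pos.trans hp),
      zero_mul]
  · have hconj : -1 / (p - 1) * p + 1 = -1 / (p - 1) := by
      field_simp [(sub_pos.2 hp).ne']
      ring
    calc dualWeight p w x ^ p * w x
        = w x ^ (-1 / (p - 1) * p) * w x ^ (1 : ℝ) := by rw [dualWeight, rpow_mul, rpow_one]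
      _ = dualWeight p w x := by rw [← rpow_add _ _ hx0 hxt, hconj, dualWeight]

lemma measurable_dualWeight [MeasurableSpace Ω] {w : Ω → ℝ≥0∞} (hw : Measurable w) :
    Measurable (dualWeight p w) :=
  hw.pow_const _

lemma dualWeight_ofReal_ae_eq [MeasurableSpace Ω] {μ : Measure Ω} {σ : Ω → ℝ}
    (hσ : ∀ᵐ x ∂μ, 0 < σ x) :
    dualWeight p (fun x => ENNReal.ofReal (σ x)) =ᵐ[μ]
      fun x => ENNReal.ofReal (σ x ^ (-1 / (p - 1))) :=
  hσ.mono fun _ hx => ofReal_rpow_of_pos hx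

end DualWeight

section Testing

variable {Ω 𝕜 E : Type*} [MeasurableSpace Ω] [ENorm E] {μ : Measure Ω} {p : ℝ}
  {w : Ω → ℝ≥0∞} {T : (Ω → 𝕜) → Ω → E} {A c : ℝ≥0∞} {B B' : Set Ω}

lemma rpow_mul_setLIntegral_le_weightedLpIntegral (hp : 0 ≤ p) {f : Ω → E}
    (h : ∀ᵐ z ∂μ.restrict B, c ≤ ‖f z‖ₑ) :
    c ^ p * ∫⁻ z in B, w z ∂μ ≤ weightedLpIntegral μ p w f :=
  calc c ^ p * ∫⁻ z in B, w z ∂μ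
      ≤ ∫⁻ z in B, c ^ p * w z ∂μ := lintegral_const_mul_le _ _
    _ ≤ ∫⁻ z in B, ‖f z‖ₑ ^ p * w z ∂μ :=
        lintegral_mono_ae (h.mono fun _ hz => by gcongr)
    _ ≤ weightedLpIntegral μ p w f := setLIntegral_le_lintegral B _

lemma BoundedOnWeightedLp.weightedLpIntegral_le [MeasurableSpace 𝕜] [ENorm 𝕜] (hp : 0 < p)
    (hT : BoundedOnWeightedLp μ p w T A) {f : Ω → 𝕜} (hf : Measurable f)
    (hfin : weightedLpIntegral μ p w f < ⊤) :
    weightedLpIntegral μ p w (T f) ≤ A ^ p * weightedLpIntegral μ p w f := by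
  have h := rpow_le_rpow (hT f hf hfin) hp.le
  rwa [mul_rpow_of_nonneg _ _ hp.le, ← rpow_mul, ← rpow_mul, one_div_mul_cancel hp.ne', rpow_one,
    rpow_one] at h

variable [RCLike 𝕜]

lemma weightedLpIntegral_coe (g : Ω → ℝ≥0) :
    weightedLpIntegral μ p w (fun x => ((g x : ℝ) : 𝕜)) =
      ∫⁻ x, (g x : ℝ≥0∞) ^ p * w x ∂μ := by
  simp only [weightedLpIntegral, ← ofReal_norm, RCLike.norm_ofReal, NNReal.abs_eq,
    ofReal_coe_nnreal]

lemma lintegral_indicator_rpow_mul (hp : 0 < p) (hB : MeasurableSet B) (g : Ω → ℝ≥0) :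
    ∫⁻ x, ((B.indicator g x : ℝ≥0) : ℝ≥0∞) ^ p * w x ∂μ =
      ∫⁻ x in B, (g x : ℝ≥0∞) ^ p * w x ∂μ := by
  rw [← lintegral_indicator hB]
  refine lintegral_congr fun x => ?_
  by_cases hx : x ∈ B <;> simp [hx, hp]

theorem BoundedOnWeightedLp.setLAverage_rpow_mul_setLIntegral_le (hp : 0 < p)
    (hT : BoundedOnWeightedLp μ p w T A) (hdom : DominatesAverages μ p w T c B B')
    (hB : MeasurableSet B) {g : Ω → ℝ≥0} (hg : Measurable g)
    (hfin : ∫⁻ x in B, (g x : ℝ≥0∞) ^ p * w x ∂μ < ⊤) :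
    (c * ⨍⁻ x in B, g x ∂μ) ^ p * ∫⁻ x in B', w x ∂μ ≤
      A ^ p * ∫⁻ x in B, (g x : ℝ≥0∞) ^ p * w x ∂μ := by
  have hgB : Measurable (B.indicator g) := hg.indicator hB
  have havg :
      ⨍⁻ x in B, ((B.indicator g x : ℝ≥0) : ℝ≥0∞) ∂μ = ⨍⁻ x in B, (g x : ℝ≥0∞) ∂μ :=
    setLAverage_congr_fun hB fun x hx => by rw [Set.indicator_of_mem hx]
  rw [← lintegral_indicator_rpow_mul hp hB] at hfin ⊢
  have hlower := hdom _ hgB Set.support_indicator_subset hfin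
  rw [havg] at hlower
  rw [← weightedLpIntegral_coe (𝕜 := 𝕜)] at hfin ⊢
  exact (rpow_mul_setLIntegral_le_weightedLpIntegral hp.le hlower).trans
    (hT.weightedLpIntegral_le hp (RCLike.measurable_ofReal.comp hgB.coe_nnreal_real) hfin)

lemma BoundedOnWeightedLp.rpow_mul_setLIntegral_le (hp : 0 < p)
    (hT : BoundedOnWeightedLp μ p w T A) (hdom : DominatesAverages μ p w T c B B')
    (hB : MeasurableSet B) (hB0 : μ B ≠ 0) (hBtop : μ B ≠ ⊤) (hw : ∫⁻ x in B, w x ∂μ < ⊤) :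
    c ^ p * ∫⁻ x in B', w x ∂μ ≤ A ^ p * ∫⁻ x in B, w x ∂μ := by
  simpa [setLAverage_one hB0 hBtop] using
    hT.setLAverage_rpow_mul_setLIntegral_le hp hdom hB (g := 1) measurable_one (by simpa using hw)

lemma BoundedOnWeightedLp.setLAverage_dualWeight_rpow_mul_setLIntegral_le (hp : 1 < p)
    (hT : BoundedOnWeightedLp μ p w T A) (hdom : DominatesAverages μ p w T c B B')
    (hB : MeasurableSet B) (hw : Measurable w) (hw' : ∫⁻ x in B, dualWeight p w x ∂μ < ⊤) :
    (c * ⨍⁻ x in B, dualWeight p w x ∂μ) ^ p * ∫⁻ x in B', w x ∂μ ≤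
      A ^ p * ∫⁻ x in B, dualWeight p w x ∂μ := by
  have hmeas := measurable_dualWeight (p := p) hw
  have hfin : ∀ᵐ x ∂μ.restrict B, dualWeight p w x ≠ ⊤ :=
    (ae_lt_top hmeas hw'.ne).mono fun _ => LT.lt.ne
  have hcoe : (fun x => ((dualWeight p w x).toNNReal : ℝ≥0∞)) =ᵐ[μ.restrict B] dualWeight p w :=
    hfin.mono fun _ => coe_toNNReal
  have hpow : ∫⁻ x in B, ((dualWeight p w x).toNNReal : ℝ≥0∞) ^ p * w x ∂μ =
      ∫⁻ x in B, dualWeight p w x ∂μ :=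
    lintegral_congr_ae <| hfin.mono fun x hx => by
      simp only [coe_toNNReal hx, dualWeight_rpow_mul_self hp hx]
  have htest := hT.setLAverage_rpow_mul_setLIntegral_le (one_pos.trans hp) hdom hB
    hmeas.ennreal_toNNReal (hpow ▸ hw')
  rwa [hpow, laverage_congr hcoe] at htest

end Testing

section RealForm

variable {Ω 𝕜 E : Type*} [MeasurableSpace Ω] {μ : Measure Ω} {p : ℝ} {w : Ω → ℝ≥0∞}
  {T : (Ω → 𝕜) → Ω → E}

lemma boundedOnWeightedLp_iff_ofReal_norm [MeasurableSpace 𝕜] [SeminormedAddGroup 𝕜]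
    [SeminormedAddGroup E] {A : ℝ≥0∞} :
    BoundedOnWeightedLp μ p w T A ↔
      ∀ f : Ω → 𝕜, Measurable f → ∫⁻ z, ENNReal.ofReal ‖f z‖ ^ p * w z ∂μ < ⊤ →
        (∫⁻ z, ENNReal.ofReal ‖T f z‖ ^ p * w z ∂μ) ^ (1 / p) ≤
          A * (∫⁻ z, ENNReal.ofReal ‖f z‖ ^ p * w z ∂μ) ^ (1 / p) := by
  simp only [BoundedOnWeightedLp, weightedLpIntegral, ofReal_norm]

lemma DominatesAverages.of_real [RCLike 𝕜] [SeminormedAddGroup E] {c : ℝ≥0∞} {B B' : Set Ω}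
    (h : ∀ f : Ω → ℝ, Measurable f → (∀ x, 0 ≤ f x) → Function.support f ⊆ B →
      ∫⁻ z, ENNReal.ofReal (f z) ^ p * w z ∂μ < ⊤ →
      ∀ᵐ z ∂μ.restrict B', c * ((∫⁻ x in B, ENNReal.ofReal (f x) ∂μ) / μ B) ≤
        ENNReal.ofReal ‖T (fun x => (f x : 𝕜)) z‖) :
    DominatesAverages μ p w T c B B' := by
  intro g hg hsupp hfin
  have hsupp_real : Function.support (fun x => (g x : ℝ)) ⊆ B := by
    simpa only [Function.support, ne_eq, NNReal.coe_eq_zero] using hsupp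
  simpa only [setLAverage_eq, ofReal_norm, ofReal_coe_nnreal] using
    h (fun x => g x) hg.coe_nnreal_real (fun x => (g x).2) hsupp_real
      (by simpa only [ofReal_coe_nnreal] using hfin)

end RealForm

section Combination

lemma rpow_two_mul_eq_mul_rpow (a : ℝ≥0∞) {p : ℝ} (hp : 0 ≤ p) : a ^ (2 * p) = a ^ p * a ^ p := by
  rw [two_mul, rpow_add_of_nonneg _ _ hp hp]

lemma rpow_two_mul_mul_le_of_two_tests {p : ℝ} (hp : 1 < p) {c A m S s t : ℝ≥0∞}
    (hm0 : m ≠ 0) (hmtop : m ≠ ⊤) (httop : t ≠ ⊤) (hs : c ^ p * (m * s) ≤ A ^ p * S)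
    (ht : (c * t) ^ p * S ≤ A ^ p * (m * t)) :
    c ^ (2 * p) * (s * t ^ (p - 1)) ≤ A ^ (2 * p) := by
  have hp0 : 0 ≤ p := (one_pos.trans hp).le
  rcases eq_or_ne t 0 with rfl | ht0
  · simp [hp]
  have htp : t ^ p = t ^ (p - 1) * t := by
    simpa using rpow_add (x := t) (p - 1) 1 ht0 httop
  rw [rpow_two_mul_eq_mul_rpow _ hp0, rpow_two_mul_eq_mul_rpow _ hp0,
    ← ENNReal.mul_le_mul_iff_left (mul_ne_zero hm0 ht0) (mul_ne_top hmtop httop)]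
  calc c ^ p * c ^ p * (s * t ^ (p - 1)) * (m * t)
      = (c ^ p * (m * s)) * (c * t) ^ p := by rw [mul_rpow_of_nonneg _ _ hp0, htp]; ring
    _ ≤ (A ^ p * S) * (c * t) ^ p := by gcongr
    _ = A ^ p * ((c * t) ^ p * S) := by ring
    _ ≤ A ^ p * (A ^ p * (m * t)) := by gcongr
    _ = A ^ p * A ^ p * (m * t) := by ring

lemma le_ofReal_rpow_neg_mul_rpow {c A r : ℝ} (hc : 0 < c) (hA : 0 ≤ A) (hr : 0 ≤ r) {x : ℝ≥0∞}
    (h : ENNReal.ofReal c ^ r * x ≤ ENNReal.ofReal A ^ r) :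
    x ≤ ENNReal.ofReal (c ^ (-r) * A ^ r) := by
  have hcr : 0 < c ^ r := Real.rpow_pos_of_pos hc r
  rw [ofReal_rpow_of_pos hc, ofReal_rpow_of_nonneg hA hr, mul_comm,
    ← ENNReal.le_div_iff_mul_le (.inl (ofReal_pos.2 hcr).ne') (.inl ofReal_ne_top),
    ← ofReal_div_of_pos hcr] at h
  rwa [Real.rpow_neg hc.le, inv_mul_eq_div]

end Combination

theorem statement19_general {Ω 𝕜 E : Type*} [MeasurableSpace Ω] [RCLike 𝕜] [ENorm E]
    {μ : Measure Ω} {p : ℝ} (hp : 1 < p) {w : Ω → ℝ≥0∞} (hw : Measurable w)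
    {T : (Ω → 𝕜) → Ω → E} {A c : ℝ≥0∞} (hT : BoundedOnWeightedLp μ p w T A)
    {B₁ B₂ : Set Ω} (hB₁ : MeasurableSet B₁) (hB₂ : MeasurableSet B₂)
    (hB₁0 : μ B₁ ≠ 0) (hB₁top : μ B₁ ≠ ⊤) (hB₂0 : μ B₂ ≠ 0) (hB₂top : μ B₂ ≠ ⊤)
    (hwB₂ : ∫⁻ x in B₂, w x ∂μ < ⊤) (hw'B₁ : ∫⁻ x in B₁, dualWeight p w x ∂μ < ⊤)
    (h₁₂ : DominatesAverages μ p w T c B₁ B₂) (h₂₁ : DominatesAverages μ p w T c B₂ B₁) :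
    c ^ (2 * p) * bekolleBonamiProduct μ p w B₁ ≤ A ^ (2 * p) := by
  have hindicator := hT.rpow_mul_setLIntegral_le (one_pos.trans hp) h₂₁ hB₂ hB₂0 hB₂top hwB₂
  have hdual := hT.setLAverage_dualWeight_rpow_mul_setLIntegral_le hp h₁₂ hB₁ hw hw'B₁
  rw [← measure_mul_setLAverage _ hB₁top] at hindicator
  rw [← measure_mul_setLAverage (dualWeight p w) hB₁top] at hdual
  exact rpow_two_mul_mul_le_of_two_tests hp hB₁0 hB₁top (setLAverage_lt_top hw'B₁.ne).ne
    hindicator hdual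

/-- Abstract two-ball testing argument for the necessity of the
Bekolle–Bonami condition: if a bounded linear operator `T` on `L^p_σ`
dominates averages between two sets `B₁, B₂`, then the `B_p` quantity of `σ`
on `B₁` is at most `c₀^{-2p}·A^{2p}`. -/
theorem statement19 {Ω : Type*} [MeasurableSpace Ω] (μ : Measure Ω)
    (p : ℝ) (hp : 1 < p)
    (σ : Ω → ℝ) (hσm : Measurable σ) (hσpos : ∀ᵐ z ∂μ, 0 < σ z)
    (T : (Ω → ℂ) → Ω → ℂ)
    (hadd : ∀ f g : Ω → ℂ, T (f + g) = T f + T g)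
    (hsmul : ∀ (a : ℂ) (f : Ω → ℂ), T (a • f) = a • T f)
    (A : ℝ) (hA : 0 ≤ A)
    (hTbd : ∀ f : Ω → ℂ, Measurable f →
      (∫⁻ z, ENNReal.ofReal ‖f z‖ ^ p * ENNReal.ofReal (σ z) ∂μ) < ⊤ →
      (∫⁻ z, ENNReal.ofReal ‖T f z‖ ^ p * ENNReal.ofReal (σ z) ∂μ) ^ (1 / p) ≤
        ENNReal.ofReal A *
          (∫⁻ z, ENNReal.ofReal ‖f z‖ ^ p * ENNReal.ofReal (σ z) ∂μ) ^ (1 / p))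
    (B₁ B₂ : Set Ω) (hB₁m : MeasurableSet B₁) (hB₂m : MeasurableSet B₂)
    (hB₁pos : 0 < μ B₁) (hB₁fin : μ B₁ < ⊤)
    (hB₂pos : 0 < μ B₂) (hB₂fin : μ B₂ < ⊤)
    (hσB₁ : ∫⁻ x in B₁, ENNReal.ofReal (σ x) ∂μ < ⊤)
    (hσB₂ : ∫⁻ x in B₂, ENNReal.ofReal (σ x) ∂μ < ⊤)
    (hσ'B₁ : ∫⁻ x in B₁, ENNReal.ofReal (σ x ^ (-1 / (p - 1))) ∂μ < ⊤)
    (hσ'B₂ : ∫⁻ x in B₂, ENNReal.ofReal (σ x ^ (-1 / (p - 1))) ∂μ < ⊤)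
    (c₀ : ℝ) (hc₀ : 0 < c₀)
    (hT12 : ∀ f : Ω → ℝ, Measurable f → (∀ x, 0 ≤ f x) →
      Function.support f ⊆ B₁ →
      (∫⁻ z, ENNReal.ofReal (f z) ^ p * ENNReal.ofReal (σ z) ∂μ) < ⊤ →
      ∀ᵐ z ∂(μ.restrict B₂),
        ENNReal.ofReal c₀ * ((∫⁻ x in B₁, ENNReal.ofReal (f x) ∂μ) / μ B₁) ≤
          ENNReal.ofReal ‖T (fun x => (f x : ℂ)) z‖)
    (hT21 : ∀ f : Ω → ℝ, Measurable f → (∀ x, 0 ≤ f x) →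
      Function.support f ⊆ B₂ →
      (∫⁻ z, ENNReal.ofReal (f z) ^ p * ENNReal.ofReal (σ z) ∂μ) < ⊤ →
      ∀ᵐ z ∂(μ.restrict B₁),
        ENNReal.ofReal c₀ * ((∫⁻ x in B₂, ENNReal.ofReal (f x) ∂μ) / μ B₂) ≤
          ENNReal.ofReal ‖T (fun x => (f x : ℂ)) z‖) :
    ((∫⁻ x in B₁, ENNReal.ofReal (σ x) ∂μ) / μ B₁) *
        ((∫⁻ x in B₁, ENNReal.ofReal (σ x ^ (-1 / (p - 1))) ∂μ) / μ B₁) ^ (p - 1) ≤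
      ENNReal.ofReal (c₀ ^ (-(2 * p)) * A ^ (2 * p)) := by
  let w : Ω → ℝ≥0∞ := fun z => ENNReal.ofReal (σ z)
  have hdual : ∫⁻ x in B₁, dualWeight p w x ∂μ =
      ∫⁻ x in B₁, ENNReal.ofReal (σ x ^ (-1 / (p - 1))) ∂μ :=
    lintegral_congr_ae (dualWeight_ofReal_ae_eq (ae_restrict_of_ae hσpos))
  have hBp := statement19_general (w := w) hp hσm.ennreal_ofReal
    (boundedOnWeightedLp_iff_ofReal_norm.2 hTbd) hB₁m hB₂m hB₁pos.ne' hB₁fin.ne hB₂pos.ne'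
    hB₂fin.ne hσB₂ (hdual ▸ hσ'B₁) (.of_real hT12) (.of_real hT21)
  rw [bekolleBonamiProduct, setLAverage_eq, setLAverage_eq, hdual] at hBp
  exact le_ofReal_rpow_neg_mul_rpow hc₀ hA (by linarith) hBp
end
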